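/- arXiv:1508.02014 — 2 statements merged into one kernel-verified Lean document; each statement's English description precedes it below -/
import Mathlib

section
/- Let n ≥ 2, let q : ℝ^n_+ → ℝ satisfy the cost-function conditions, let c ∈ ℝ^n_+, set α = c_1 + ⋯ + c_n, let 1 ≤ r < ∞, let h ∈ L^1_α(ℝ^1_+), and let f ∈ L^r_{I−c}(ℝ^n_+) ∩ C(ℝ^n_+). Then ‖R^h_q f‖_{r,c} ≤ Γ(α)^{−1} ‖e^{−q}‖_{1,c} ‖h‖_{1,α} ‖f‖_{r,I−c}, where Γ is the Gamma function; in particular R^h_q f ∈ L^r_c(ℝ^n_+). -/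
open MeasureTheory Complex Set

noncomputable section

/-- The positive orthant `ℝ^n_+`. -/
def posOrth (n : ℕ) : Set (Fin n → ℝ) := {x | ∀ i, 0 < x i}

/-- `q` satisfies the cost-function conditions: `C¹` on `ℝ^n_+`, positive,
positively homogeneous of degree one, with bounded level sets. -/
def IsCostFun (n : ℕ) (q : (Fin n → ℝ) → ℝ) : Prop :=
  ContDiffOn ℝ 1 q (posOrth n) ∧
  (∀ x ∈ posOrth n, 0 < q x) ∧
  (∀ lam : ℝ, 0 < lam → ∀ x ∈ posOrth n, q (fun i => lam * x i) = lam * q x) ∧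
  (∀ t : ℝ, Bornology.IsBounded {x | x ∈ posOrth n ∧ q x = t})

/-- Membership in `L^r_c(ℝ^n_+)` for `1 ≤ r < ∞`:
measurable with `∫ |f|^r x^{rc-I} < ∞`. -/
def MemLrw (n : ℕ) (r : ℝ) (c : Fin n → ℝ) (f : (Fin n → ℝ) → ℝ) : Prop :=
  AEStronglyMeasurable f (volume.restrict (posOrth n)) ∧
  IntegrableOn (fun x => |f x| ^ r * ∏ i, x i ^ (r * c i - 1)) (posOrth n)

/-- The norm `‖f‖_{r,c} = (∫_{ℝ^n_+} |f|^r x^{rc-I} dx)^{1/r}`. -/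
def normLrw (n : ℕ) (r : ℝ) (c : Fin n → ℝ) (f : (Fin n → ℝ) → ℝ) : ℝ :=
  (∫ x in posOrth n, |f x| ^ r * ∏ i, x i ^ (r * c i - 1)) ^ (1 / r)

/-- The norm `‖h‖_{1,α} = ∫_0^∞ |h(t)| t^{α-1} dt`. -/
def normL1w1 (α : ℝ) (h : ℝ → ℝ) : ℝ :=
  ∫ t in Ioi (0 : ℝ), |h t| * t ^ (α - 1)

/-- Membership in `L¹_α(ℝ¹_+)`: measurable with `∫_0^∞ |h(t)| t^{α-1} dt < ∞`. -/
def MemL1w1 (α : ℝ) (h : ℝ → ℝ) : Prop :=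
  IntegrableOn (fun t => h t * t ^ (α - 1)) (Ioi (0 : ℝ))

/-- The operator `(R^h_q f)(p) = ∫_{ℝ^n_+} h(q(p₁x₁,…,pₙxₙ)) f(x) dx`. -/
def Rhq (n : ℕ) (q : (Fin n → ℝ) → ℝ) (h : ℝ → ℝ) (f : (Fin n → ℝ) → ℝ)
    (p : Fin n → ℝ) : ℝ :=
  ∫ x in posOrth n, h (q (fun i => p i * x i)) * f x

/-!
On the multiplicative group `ℝ^n_+` with Haar measure `x^{-I} dx`, the weights `p^c` and `x^{I-c}`
turn `R^h_q` into the convolution-type operator with kernel `x^c h(q(x))` evaluated at `p x`. The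
Schur test bounds its norm on `L^r` by the `L¹` norm of this kernel, that is, by
`∫ |h(q(x))| x^{c-I} dx`. Since `q` is homogeneous of degree one, the sublevel set `{q ≤ t}` has
`x^{c-I} dx`-measure proportional to `t^α`, so the image of this measure under `q` is
`κ t^{α-1} dt`, and the integral is `κ ‖h‖_{1,α}`. Testing against `h(t) = e^{-t}` gives
`κ Γ(α) = ‖e^{-q}‖_{1,c}`.
-/

open scoped ENNReal

section SchurTest

variable {X Y : Type*} [MeasurableSpace X] [MeasurableSpace Y] {μ : Measure X} {ν : Measure Y}
  {r : ℝ}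

theorem rpow_lintegral_mul_le {k g : Y → ℝ≥0∞} (hk : AEMeasurable k ν) (hg : AEMeasurable g ν)
    (hr : 1 ≤ r) :
    (∫⁻ y, k y * g y ∂ν) ^ r ≤ (∫⁻ y, k y ∂ν) ^ (r - 1) * ∫⁻ y, k y * g y ^ r ∂ν := by
  have hr_pos : 0 < r := by linarith
  have hexp : 0 ≤ 1 - 1 / r := by rwa [sub_nonneg, div_le_one hr_pos]
  have hsplit (y : Y) : k y ^ (1 - 1 / r) * (k y * g y ^ r) ^ (1 / r) = k y * g y := by
    rw [ENNReal.mul_rpow_of_nonneg _ _ (by positivity), ← mul_assoc,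
      ← ENNReal.rpow_add_of_nonneg _ _ hexp (by positivity), ← ENNReal.rpow_mul,
      mul_one_div_cancel hr_pos.ne', ENNReal.rpow_one, sub_add_cancel, ENNReal.rpow_one]
  calc (∫⁻ y, k y * g y ∂ν) ^ r
      = (∫⁻ y, k y ^ (1 - 1 / r) * (k y * g y ^ r) ^ (1 / r) ∂ν) ^ r := by simp_rw [hsplit]
    _ ≤ ((∫⁻ y, k y ∂ν) ^ (1 - 1 / r) * (∫⁻ y, k y * g y ^ r ∂ν) ^ (1 / r)) ^ r := by
        gcongr
        exact ENNReal.lintegral_mul_norm_pow_le hk (hk.mul (hg.pow_const r)) hexp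
          (by positivity) (sub_add_cancel _ _)
    _ = (∫⁻ y, k y ∂ν) ^ (r - 1) * ∫⁻ y, k y * g y ^ r ∂ν := by
        rw [ENNReal.mul_rpow_of_nonneg _ _ hr_pos.le, ← ENNReal.rpow_mul, ← ENNReal.rpow_mul,
          one_div_mul_cancel hr_pos.ne', ENNReal.rpow_one, sub_mul, one_mul,
          one_div_mul_cancel hr_pos.ne']

theorem lintegral_rpow_lintegral_mul_le [SFinite μ] [SFinite ν] {k : X → Y → ℝ≥0∞}
    {g : Y → ℝ≥0∞} {A B : ℝ≥0∞} (hk : AEMeasurable (Function.uncurry k) (μ.prod ν))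
    (hg : AEMeasurable g ν) (hr : 1 ≤ r) (hA : ∀ᵐ x ∂μ, ∫⁻ y, k x y ∂ν ≤ A)
    (hB : ∀ᵐ y ∂ν, ∫⁻ x, k x y ∂μ ≤ B) :
    ∫⁻ x, (∫⁻ y, k x y * g y ∂ν) ^ r ∂μ ≤ A ^ (r - 1) * B * ∫⁻ y, g y ^ r ∂ν := by
  have hkg : AEMeasurable (Function.uncurry fun x y ↦ k x y * g y ^ r) (μ.prod ν) :=
    hk.mul (hg.comp_snd.pow_const r)
  have hk_left : ∀ᵐ x ∂μ, AEMeasurable (k x) ν :=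
    hk.aestronglyMeasurable.prodMk_left.mono fun _ ↦ AEStronglyMeasurable.aemeasurable
  have hk_right : ∀ᵐ y ∂ν, AEMeasurable (fun x ↦ k x y) μ :=
    hk.prod_swap.aestronglyMeasurable.prodMk_left.mono fun _ ↦ AEStronglyMeasurable.aemeasurable
  calc ∫⁻ x, (∫⁻ y, k x y * g y ∂ν) ^ r ∂μ
      ≤ ∫⁻ x, A ^ (r - 1) * ∫⁻ y, k x y * g y ^ r ∂ν ∂μ := by
        refine lintegral_mono_ae ?_
        filter_upwards [hk_left, hA] with x hkx hAx
        refine (rpow_lintegral_mul_le hkx hg hr).trans ?_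
        gcongr
    _ = A ^ (r - 1) * ∫⁻ y, ∫⁻ x, k x y * g y ^ r ∂μ ∂ν := by
        rw [lintegral_const_mul'' _ hkg.lintegral_prod_right, lintegral_lintegral_swap hkg]
    _ ≤ A ^ (r - 1) * ∫⁻ y, B * g y ^ r ∂ν := by
        gcongr A ^ (r - 1) * ?_
        refine lintegral_mono_ae ?_
        filter_upwards [hk_right, hB] with y hky hBy
        rw [lintegral_mul_const'' _ hky]
        gcongr
    _ = A ^ (r - 1) * B * ∫⁻ y, g y ^ r ∂ν := by
        rw [lintegral_const_mul'' _ (hg.pow_const r), mul_assoc]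

end SchurTest

section Young

variable {G E : Type*} [MeasurableSpace G] [NormedAddCommGroup E] [NormedSpace ℝ E]
  {μ : Measure G} [SFinite μ] {K : G → ℝ} {f : G → E} {r : ℝ}

section Mul

variable [Mul G] [MeasurableMul₂ G]

theorem quasiMeasurePreserving_mul_of_ae
    (hμ : ∀ᵐ p ∂μ, MeasurePreserving (p * ·) μ μ) :
    Measure.QuasiMeasurePreserving (fun z : G × G ↦ z.1 * z.2) (μ.prod μ) μ :=
  Measure.quasiMeasurePreserving_snd.comp
    ((MeasurePreserving.id μ).skew_product measurable_mul
      (hμ.mono fun _ hp ↦ hp.map_eq)).quasiMeasurePreserving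

theorem aestronglyMeasurable_integral_comp_mul_smul (hμ : ∀ᵐ p ∂μ, MeasurePreserving (p * ·) μ μ)
    (hK : AEStronglyMeasurable K μ) (hf : AEStronglyMeasurable f μ) :
    AEStronglyMeasurable (fun p ↦ ∫ x, K (p * x) • f x ∂μ) μ :=
  ((hK.comp_quasiMeasurePreserving (quasiMeasurePreserving_mul_of_ae hμ)).smul
    hf.comp_snd).integral_prod_right'

end Mul

theorem eLpNorm_integral_comp_mul_smul_le [CommMagma G] [MeasurableMul₂ G]
    (hμ : ∀ᵐ p ∂μ, MeasurePreserving (p * ·) μ μ)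
    (hK : AEStronglyMeasurable K μ) (hf : AEStronglyMeasurable f μ) (hr : 1 ≤ r) :
    eLpNorm (fun p ↦ ∫ x, K (p * x) • f x ∂μ) (ENNReal.ofReal r) μ ≤
      eLpNorm K 1 μ * eLpNorm f (ENNReal.ofReal r) μ := by
  have hr_pos : 0 < r := by linarith
  set A := eLpNorm K 1 μ with hA
  have hk : AEMeasurable (Function.uncurry fun p x ↦ ‖K (p * x)‖ₑ) (μ.prod μ) :=
    (hK.comp_quasiMeasurePreserving (quasiMeasurePreserving_mul_of_ae hμ)).enorm
  have hk_left : ∀ᵐ p ∂μ, ∫⁻ x, ‖K (p * x)‖ₑ ∂μ ≤ A := by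
    filter_upwards [hμ] with p hp
    rw [hA, ← eLpNorm_one_eq_lintegral_enorm]
    exact (eLpNorm_comp_measurePreserving hK hp).le
  have hk_right : ∀ᵐ x ∂μ, ∫⁻ p, ‖K (p * x)‖ₑ ∂μ ≤ A := by
    simpa only [mul_comm] using hk_left
  have hA_pow : A ^ (r - 1) * A = A ^ r := by
    nth_rw 2 [← ENNReal.rpow_one A]
    rw [← ENNReal.rpow_add_of_nonneg _ _ (by linarith) zero_le_one, sub_add_cancel]
  simp only [eLpNorm_eq_lintegral_rpow_enorm_toReal (p := ENNReal.ofReal r) (by simpa)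
    ENNReal.ofReal_ne_top, ENNReal.toReal_ofReal hr_pos.le]
  calc (∫⁻ p, ‖∫ x, K (p * x) • f x ∂μ‖ₑ ^ r ∂μ) ^ (1 / r)
      ≤ (∫⁻ p, (∫⁻ x, ‖K (p * x)‖ₑ * ‖f x‖ₑ ∂μ) ^ r ∂μ) ^ (1 / r) := by
        simp_rw [← enorm_smul]
        gcongr
        exact enorm_integral_le_lintegral_enorm _
    _ ≤ (A ^ r * ∫⁻ x, ‖f x‖ₑ ^ r ∂μ) ^ (1 / r) := by
        rw [← hA_pow]
        gcongr
        exact lintegral_rpow_lintegral_mul_le hk hf.enorm hr hk_left hk_right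
    _ = A * (∫⁻ x, ‖f x‖ₑ ^ r ∂μ) ^ (1 / r) := by
        rw [ENNReal.mul_rpow_of_nonneg _ _ (by positivity), ← ENNReal.rpow_mul,
          mul_one_div_cancel hr_pos.ne', ENNReal.rpow_one]

end Young

theorem map_withDensity_comp {X Y : Type*} [MeasurableSpace X] [MeasurableSpace Y]
    {μ : Measure X} {T : X → Y} {D : Y → ℝ≥0∞} (hT : Measurable T) (hD : Measurable D) :
    (μ.withDensity (D ∘ T)).map T = (μ.map T).withDensity D := by
  ext s hs
  rw [Measure.map_apply hT hs, withDensity_apply _ (hT hs), withDensity_apply _ hs,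
    Measure.restrict_map hT hs, lintegral_map hD hT]
  rfl

section Orthant

variable {n : ℕ} {b c p x : Fin n → ℝ}

theorem posOrth_eq_pi : posOrth n = univ.pi fun _ ↦ Ioi 0 := by
  ext
  simp [posOrth]

theorem measurableSet_posOrth : MeasurableSet (posOrth n) := by
  rw [posOrth_eq_pi]
  exact .univ_pi fun _ ↦ measurableSet_Ioi

theorem smul_mem_posOrth {t : ℝ} (ht : 0 < t) (hx : x ∈ posOrth n) : t • x ∈ posOrth n :=
  fun i ↦ mul_pos ht (hx i)

theorem preimage_mul_left_posOrth (hp : p ∈ posOrth n) : (p * ·) ⁻¹' posOrth n = posOrth n := by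
  ext x
  exact forall_congr' fun i ↦ mul_pos_iff_of_pos_left (hp i)

/-- The monomial `x ^ c = x₁ ^ c₁ ⋯ xₙ ^ cₙ` with real exponents. -/
def multiRpow (c x : Fin n → ℝ) : ℝ := ∏ i, x i ^ c i

@[fun_prop]
theorem measurable_multiRpow (c : Fin n → ℝ) : Measurable (multiRpow c) := by
  unfold multiRpow
  fun_prop

theorem multiRpow_pos (c : Fin n → ℝ) (hx : x ∈ posOrth n) : 0 < multiRpow c x :=
  Finset.prod_pos fun i _ ↦ Real.rpow_pos_of_pos (hx i) _

theorem multiRpow_mul (c : Fin n → ℝ) (hp : p ∈ posOrth n) (hx : x ∈ posOrth n) :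
    multiRpow c (p * x) = multiRpow c p * multiRpow c x := by
  unfold multiRpow
  rw [← Finset.prod_mul_distrib]
  exact Finset.prod_congr rfl fun i _ ↦ Real.mul_rpow (hp i).le (hx i).le

theorem multiRpow_add (b c : Fin n → ℝ) (hx : x ∈ posOrth n) :
    multiRpow (b + c) x = multiRpow b x * multiRpow c x := by
  unfold multiRpow
  rw [← Finset.prod_mul_distrib]
  exact Finset.prod_congr rfl fun i _ ↦ Real.rpow_add (hx i) _ _

theorem multiRpow_smul (r : ℝ) (c : Fin n → ℝ) (hx : x ∈ posOrth n) :
    multiRpow (r • c) x = multiRpow c x ^ r := by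
  unfold multiRpow
  rw [← Real.finsetProd_rpow _ _ fun i _ ↦ Real.rpow_nonneg (hx i).le _]
  refine Finset.prod_congr rfl fun i _ ↦ ?_
  rw [← Real.rpow_mul (hx i).le, mul_comm, Pi.smul_apply, smul_eq_mul]

@[simp]
theorem multiRpow_zero (x : Fin n → ℝ) : multiRpow 0 x = 1 := by
  simp [multiRpow]

theorem multiRpow_const (c : Fin n → ℝ) {t : ℝ} (ht : 0 < t) :
    multiRpow c (fun _ ↦ t) = t ^ ∑ i, c i :=
  (Real.rpow_sum_of_pos ht _ _).symm

/-- The measure `x ^ (c - I) dx` on the positive orthant, so that `‖f‖_{r,c}` is the `L^r` norm of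
`f` for `orthantMeasure (r • c)`. The case `c = 0` is the Haar measure of the multiplicative group
`ℝ^n_+`, and `c = 1` is Lebesgue measure. -/
def orthantMeasure (c : Fin n → ℝ) : Measure (Fin n → ℝ) :=
  (volume.restrict (posOrth n)).withDensity fun x ↦ ENNReal.ofReal (multiRpow (c - 1) x)

instance : SFinite (orthantMeasure c) := by
  unfold orthantMeasure
  infer_instance

theorem ae_mem_posOrth : ∀ᵐ x ∂orthantMeasure c, x ∈ posOrth n :=
  withDensity_absolutelyContinuous _ _ (ae_restrict_mem measurableSet_posOrth)

theorem orthantMeasure_add (b c : Fin n → ℝ) :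
    orthantMeasure (b + c) =
      (orthantMeasure b).withDensity fun x ↦ ENNReal.ofReal (multiRpow c x) := by
  unfold orthantMeasure
  rw [← withDensity_mul _ (by fun_prop) (by fun_prop)]
  refine withDensity_congr_ae ?_
  filter_upwards [ae_restrict_mem measurableSet_posOrth] with x hx
  rw [Pi.mul_apply, ← ENNReal.ofReal_mul (multiRpow_pos _ hx).le, ← multiRpow_add _ _ hx,
    add_sub_right_comm]

theorem orthantMeasure_one : orthantMeasure (1 : Fin n → ℝ) = volume.restrict (posOrth n) := by
  simp [orthantMeasure]

theorem lintegral_orthantMeasure_add (b c : Fin n → ℝ) (φ : (Fin n → ℝ) → ℝ≥0∞) :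
    ∫⁻ x, φ x ∂orthantMeasure (b + c) =
      ∫⁻ x, ENNReal.ofReal (multiRpow c x) * φ x ∂orthantMeasure b := by
  rw [orthantMeasure_add, lintegral_withDensity_eq_lintegral_mul_non_measurable _ (by fun_prop)
    (by simp)]
  rfl

theorem integral_orthantMeasure_add (b c : Fin n → ℝ) (φ : (Fin n → ℝ) → ℝ) :
    ∫ x, φ x ∂orthantMeasure (b + c) = ∫ x, multiRpow c x * φ x ∂orthantMeasure b := by
  rw [orthantMeasure_add, integral_withDensity_eq_integral_toReal_smul (by fun_prop) (by simp)]
  refine integral_congr_ae ?_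
  filter_upwards [ae_mem_posOrth] with x hx
  rw [ENNReal.toReal_ofReal (multiRpow_pos c hx).le, smul_eq_mul]

theorem integrable_orthantMeasure_add_iff {φ : (Fin n → ℝ) → ℝ} :
    Integrable φ (orthantMeasure (b + c)) ↔
      Integrable (fun x ↦ multiRpow c x * φ x) (orthantMeasure b) := by
  rw [orthantMeasure_add, integrable_withDensity_iff_integrable_smul' (by fun_prop) (by simp)]
  refine integrable_congr ?_
  filter_upwards [ae_mem_posOrth] with x hx
  rw [ENNReal.toReal_ofReal (multiRpow_pos c hx).le, smul_eq_mul]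

theorem orthantMeasure_absolutelyContinuous (b c : Fin n → ℝ) :
    orthantMeasure b ≪ orthantMeasure c := by
  rw [← add_sub_cancel b c, orthantMeasure_add]
  refine withDensity_absolutelyContinuous' (by fun_prop) ?_
  filter_upwards [ae_mem_posOrth] with x hx
  simpa using multiRpow_pos _ hx

theorem map_mul_left_volume_posOrth (hp : p ∈ posOrth n) :
    (volume.restrict (posOrth n)).map (p * ·) =
      ENNReal.ofReal (multiRpow (-1) p) • volume.restrict (posOrth n) := by
  have hprod : 0 < ∏ i, p i := Finset.prod_pos fun i _ ↦ hp i
  have hmap : volume.map (p * ·) = ENNReal.ofReal (multiRpow (-1) p) • volume := by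
    have hdet : LinearMap.det (Matrix.diagonal p).toLin' = ∏ i, p i := by
      rw [LinearMap.det_toLin', Matrix.det_diagonal]
    have hdiag : ⇑(Matrix.diagonal p).toLin' = (p * ·) := by
      ext x i
      simp [Matrix.mulVec_diagonal]
    have hinv : |(∏ i, p i)⁻¹| = multiRpow (-1) p := by
      rw [abs_of_pos (inv_pos.2 hprod)]
      simp [multiRpow, Real.rpow_neg_one]
    rw [← hdiag, Real.map_linearMap_volume_pi_eq_smul_volume_pi (hdet ▸ hprod.ne'), hdet, hinv]
  calc (volume.restrict (posOrth n)).map (p * ·)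
      = (volume.restrict ((p * ·) ⁻¹' posOrth n)).map (p * ·) := by
        rw [preimage_mul_left_posOrth hp]
    _ = (volume.map (p * ·)).restrict (posOrth n) :=
        (Measure.restrict_map (by fun_prop) measurableSet_posOrth).symm
    _ = ENNReal.ofReal (multiRpow (-1) p) • volume.restrict (posOrth n) := by
        rw [hmap, Measure.restrict_smul]

theorem map_mul_left_orthantMeasure (hp : p ∈ posOrth n) (c : Fin n → ℝ) :
    (orthantMeasure c).map (p * ·) = ENNReal.ofReal (multiRpow (-c) p) • orthantMeasure c := by
  let D : (Fin n → ℝ) → ℝ≥0∞ := fun x ↦ ENNReal.ofReal (multiRpow (c - 1) x)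
  have hD : Measurable D := by fun_prop
  have hT : Measurable (p * · : (Fin n → ℝ) → Fin n → ℝ) := by fun_prop
  have hdensity : orthantMeasure c = ENNReal.ofReal (multiRpow (1 - c) p) •
      (volume.restrict (posOrth n)).withDensity (D ∘ (p * ·)) := by
    rw [← withDensity_smul _ (hD.comp hT)]
    refine withDensity_congr_ae ?_
    filter_upwards [ae_restrict_mem measurableSet_posOrth] with x hx
    rw [Pi.smul_apply, smul_eq_mul, Function.comp_apply,
      ← ENNReal.ofReal_mul (multiRpow_pos _ hp).le, multiRpow_mul _ hp hx, ← mul_assoc,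
      ← multiRpow_add _ _ hp, sub_add_sub_cancel, sub_self, multiRpow_zero, one_mul]
  have hpow : ENNReal.ofReal (multiRpow (1 - c) p) * ENNReal.ofReal (multiRpow (-1) p) =
      ENNReal.ofReal (multiRpow (-c) p) := by
    rw [← ENNReal.ofReal_mul (multiRpow_pos _ hp).le, ← multiRpow_add _ _ hp, ← sub_eq_add_neg,
      sub_sub_cancel_left]
  calc (orthantMeasure c).map (p * ·)
      = ENNReal.ofReal (multiRpow (1 - c) p) •
          ((volume.restrict (posOrth n)).map (p * ·)).withDensity D := by
        rw [hdensity, Measure.map_smul, map_withDensity_comp hT hD]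
    _ = ENNReal.ofReal (multiRpow (-c) p) • orthantMeasure c := by
        rw [map_mul_left_volume_posOrth hp, withDensity_smul_measure, smul_smul, hpow]
        rfl

theorem measurePreserving_mul_left_orthantMeasure_zero (hp : p ∈ posOrth n) :
    MeasurePreserving (p * ·) (orthantMeasure 0) (orthantMeasure 0) :=
  ⟨by fun_prop, by simp [map_mul_left_orthantMeasure hp]⟩

variable {r : ℝ} {K f : (Fin n → ℝ) → ℝ}

theorem eLpNorm_orthantMeasure_smul (hr : 0 < r) (c : Fin n → ℝ) (f : (Fin n → ℝ) → ℝ) :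
    eLpNorm f (ENNReal.ofReal r) (orthantMeasure (r • c)) =
      eLpNorm (fun x ↦ multiRpow c x * f x) (ENNReal.ofReal r) (orthantMeasure 0) := by
  simp only [eLpNorm_eq_lintegral_rpow_enorm_toReal (p := ENNReal.ofReal r) (by simpa)
    ENNReal.ofReal_ne_top, ENNReal.toReal_ofReal hr.le]
  rw [← zero_add (r • c), lintegral_orthantMeasure_add]
  congr 1
  refine lintegral_congr_ae ?_
  filter_upwards [ae_mem_posOrth] with x hx
  have hx_pos := multiRpow_pos c hx
  rw [enorm_mul, ENNReal.mul_rpow_of_nonneg _ _ hr.le, multiRpow_smul r c hx,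
    Real.enorm_of_nonneg hx_pos.le, ENNReal.ofReal_rpow_of_pos hx_pos]

theorem setIntegral_posOrth_comp_mul (hp : p ∈ posOrth n) (c : Fin n → ℝ)
    (K f : (Fin n → ℝ) → ℝ) :
    multiRpow c p * ∫ x in posOrth n, K (p * x) * f x =
      ∫ x, (multiRpow c (p * x) * K (p * x)) • (multiRpow (1 - c) x * f x) ∂orthantMeasure 0 := by
  rw [← orthantMeasure_one, ← zero_add (1 : Fin n → ℝ), integral_orthantMeasure_add,
    ← integral_const_mul, zero_add]
  refine integral_congr_ae ?_
  filter_upwards [ae_mem_posOrth] with x hx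
  have hone : multiRpow 1 x = multiRpow c x * multiRpow (1 - c) x := by
    rw [← multiRpow_add _ _ hx, add_sub_cancel]
  rw [multiRpow_mul c hp hx, hone, smul_eq_mul]
  ring

theorem aestronglyMeasurable_orthantMeasure_iff :
    AEStronglyMeasurable f (orthantMeasure c) ↔
      AEStronglyMeasurable f (volume.restrict (posOrth n)) := by
  rw [← orthantMeasure_one]
  exact ⟨fun hf ↦ hf.mono_ac (orthantMeasure_absolutelyContinuous _ _),
    fun hf ↦ hf.mono_ac (orthantMeasure_absolutelyContinuous _ _)⟩

theorem ae_measurePreserving_mul_left_orthantMeasure_zero :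
    ∀ᵐ p ∂orthantMeasure (0 : Fin n → ℝ),
      MeasurePreserving (p * ·) (orthantMeasure 0) (orthantMeasure 0) :=
  ae_mem_posOrth.mono fun _ ↦ measurePreserving_mul_left_orthantMeasure_zero

theorem eLpNorm_setIntegral_posOrth_comp_mul_le
    (hK : AEStronglyMeasurable K (volume.restrict (posOrth n)))
    (hf : AEStronglyMeasurable f (volume.restrict (posOrth n))) (hr : 1 ≤ r) (c : Fin n → ℝ) :
    eLpNorm (fun p ↦ ∫ x in posOrth n, K (p * x) * f x) (ENNReal.ofReal r)
        (orthantMeasure (r • c)) ≤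
      eLpNorm K 1 (orthantMeasure c) *
        eLpNorm f (ENNReal.ofReal r) (orthantMeasure (r • (1 - c))) := by
  have hr_pos : 0 < r := by linarith
  have hK_weight : eLpNorm K 1 (orthantMeasure c) =
      eLpNorm (fun x ↦ multiRpow c x * K x) 1 (orthantMeasure 0) := by
    simpa using eLpNorm_orthantMeasure_smul one_pos c K
  have hK' : AEStronglyMeasurable (fun x ↦ multiRpow c x * K x) (orthantMeasure 0) :=
    (measurable_multiRpow c).aestronglyMeasurable.mul
      (aestronglyMeasurable_orthantMeasure_iff.2 hK)
  have hf' : AEStronglyMeasurable (fun x ↦ multiRpow (1 - c) x * f x) (orthantMeasure 0) :=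
    (measurable_multiRpow _).aestronglyMeasurable.mul
      (aestronglyMeasurable_orthantMeasure_iff.2 hf)
  rw [eLpNorm_orthantMeasure_smul hr_pos, eLpNorm_orthantMeasure_smul hr_pos, hK_weight]
  calc eLpNorm (fun p ↦ multiRpow c p * ∫ x in posOrth n, K (p * x) * f x) (ENNReal.ofReal r)
        (orthantMeasure 0)
      = eLpNorm (fun p ↦ ∫ x, (multiRpow c (p * x) * K (p * x)) • (multiRpow (1 - c) x * f x)
          ∂orthantMeasure 0) (ENNReal.ofReal r) (orthantMeasure 0) :=
        eLpNorm_congr_ae (ae_mem_posOrth.mono fun p hp ↦ setIntegral_posOrth_comp_mul hp c K f)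
    _ ≤ _ := eLpNorm_integral_comp_mul_smul_le (K := fun x ↦ multiRpow c x * K x)
        (f := fun x ↦ multiRpow (1 - c) x * f x)
        ae_measurePreserving_mul_left_orthantMeasure_zero hK' hf' hr

theorem aestronglyMeasurable_setIntegral_posOrth_comp_mul
    (hK : AEStronglyMeasurable K (volume.restrict (posOrth n)))
    (hf : AEStronglyMeasurable f (volume.restrict (posOrth n))) :
    AEStronglyMeasurable (fun p ↦ ∫ x in posOrth n, K (p * x) * f x)
      (volume.restrict (posOrth n)) := by
  rw [← aestronglyMeasurable_orthantMeasure_iff (c := 0)] at hK hf ⊢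
  refine (aestronglyMeasurable_integral_comp_mul_smul
    ae_measurePreserving_mul_left_orthantMeasure_zero hK
    ((measurable_multiRpow 1).aestronglyMeasurable.mul hf)).congr ?_
  filter_upwards [ae_mem_posOrth] with p hp
  simpa using (setIntegral_posOrth_comp_mul hp 0 K f).symm

theorem integrableOn_posOrth_mul_prod_rpow_iff {φ : (Fin n → ℝ) → ℝ} :
    IntegrableOn (fun x ↦ φ x * ∏ i, x i ^ (c i - 1)) (posOrth n) ↔
      Integrable φ (orthantMeasure c) := by
  rw [← add_sub_cancel 1 c, integrable_orthantMeasure_add_iff, orthantMeasure_one]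
  simp_rw [mul_comm (multiRpow _ _), add_sub_cancel]
  rfl

theorem setIntegral_posOrth_mul_prod_rpow (c : Fin n → ℝ) (φ : (Fin n → ℝ) → ℝ) :
    ∫ x in posOrth n, φ x * ∏ i, x i ^ (c i - 1) = ∫ x, φ x ∂orthantMeasure c := by
  rw [← add_sub_cancel 1 c, integral_orthantMeasure_add, orthantMeasure_one]
  simp_rw [mul_comm (multiRpow _ _), add_sub_cancel]
  rfl

theorem memLrw_iff_memLp (hr : 0 < r) :
    MemLrw n r c f ↔ MemLp f (ENNReal.ofReal r) (orthantMeasure (r • c)) := by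
  have hp : ENNReal.ofReal r ≠ 0 := by simpa
  have hpow (hf : AEStronglyMeasurable f (orthantMeasure (r • c))) :
      IntegrableOn (fun x ↦ |f x| ^ r * ∏ i, x i ^ (r * c i - 1)) (posOrth n) ↔
        MemLp f (ENNReal.ofReal r) (orthantMeasure (r • c)) := by
    rw [← integrable_norm_rpow_iff hf hp ENNReal.ofReal_ne_top, ENNReal.toReal_ofReal hr.le]
    exact integrableOn_posOrth_mul_prod_rpow_iff
  rw [MemLrw, ← aestronglyMeasurable_orthantMeasure_iff (c := r • c)]
  exact ⟨fun h ↦ (hpow h.1).1 h.2, fun h ↦ ⟨h.1, (hpow h.1).2 h⟩⟩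

theorem normLrw_eq_lpNorm (hr : 0 < r)
    (hf : AEStronglyMeasurable f (volume.restrict (posOrth n))) :
    normLrw n r c f = lpNorm f (ENNReal.ofReal r) (orthantMeasure (r • c)) := by
  rw [lpNorm_eq_integral_norm_rpow_toReal (by simpa) ENNReal.ofReal_ne_top
    (aestronglyMeasurable_orthantMeasure_iff.2 hf), ENNReal.toReal_ofReal hr.le,
    ← setIntegral_posOrth_mul_prod_rpow, ← one_div]
  rfl

end Orthant

section HalfLine

theorem ext_of_Iic_of_ne_top {X : Type*} [TopologicalSpace X] [MeasurableSpace X]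
    [SecondCountableTopology X] [LinearOrder X] [OrderTopology X] [BorelSpace X] [NoMinOrder X]
    {μ ν : Measure X} (hfin : ∀ t, μ (Iic t) ≠ ∞) (h : ∀ t, μ (Iic t) = ν (Iic t)) : μ = ν := by
  refine Measure.ext_of_Ioc' μ ν
    (fun a b _ ↦ measure_ne_top_of_subset Ioc_subset_Iic_self (hfin b)) fun a b hab ↦ ?_
  rw [← Iic_sdiff_Iic, measure_sdiff (Iic_subset_Iic.2 hab.le) nullMeasurableSet_Iic (hfin a),
    measure_sdiff (Iic_subset_Iic.2 hab.le) nullMeasurableSet_Iic (h a ▸ hfin a), h, h]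

/-- The measure `t ^ (a - 1) dt` on `(0, ∞)`, so that `‖h‖_{1,a}` is the `L¹` norm of `h`. -/
def rpowMeasure (a : ℝ) : Measure ℝ :=
  (volume.restrict (Ioi 0)).withDensity fun t ↦ ENNReal.ofReal (t ^ (a - 1))

variable {a t : ℝ}

theorem rpowMeasure_Iic_zero : rpowMeasure a (Iic 0) = 0 := by
  refine withDensity_absolutelyContinuous _ _ ?_
  rw [Measure.restrict_apply measurableSet_Iic, Iic_inter_Ioi, Ioc_self, measure_empty]

theorem rpowMeasure_Iic (ha : 0 < a) (ht : 0 < t) :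
    rpowMeasure a (Iic t) = ENNReal.ofReal (t ^ a / a) := by
  have hint : IntervalIntegrable (fun s : ℝ ↦ s ^ (a - 1)) volume 0 t :=
    intervalIntegral.intervalIntegrable_rpow' (by linarith)
  have hnonneg : 0 ≤ᵐ[volume.restrict (Ioc 0 t)] fun s : ℝ ↦ s ^ (a - 1) :=
    (ae_restrict_mem measurableSet_Ioc).mono fun s hs ↦ Real.rpow_nonneg hs.1.le _
  rw [rpowMeasure, withDensity_apply _ measurableSet_Iic, Measure.restrict_restrict
    measurableSet_Iic, Iic_inter_Ioi, ← ofReal_integral_eq_lintegral_ofReal hint.1 hnonneg,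
    ← intervalIntegral.integral_of_le ht.le, integral_rpow (Or.inl (by linarith)),
    sub_add_cancel, Real.zero_rpow ha.ne', sub_zero]

theorem eq_smul_rpowMeasure_of_homogeneous {ν : Measure ℝ} (ha : 0 < a) (hzero : ν (Iic 0) = 0)
    (hone : ν (Iic 1) ≠ ∞) (hν : ∀ t, 0 < t → ν (Iic t) = ENNReal.ofReal (t ^ a) * ν (Iic 1)) :
    ν = (ν (Iic 1) * ENNReal.ofReal a) • rpowMeasure a := by
  have hneg {t : ℝ} (ht : t ≤ 0) : ν (Iic t) = 0 := measure_mono_null (Iic_subset_Iic.2 ht) hzero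
  refine ext_of_Iic_of_ne_top (fun t ↦ ?_) fun t ↦ ?_ <;> rcases le_or_gt t 0 with ht | ht
  · simp [hneg ht]
  · rw [hν t ht]
    exact ENNReal.mul_ne_top ENNReal.ofReal_ne_top hone
  · simp [hneg ht, measure_mono_null (Iic_subset_Iic.2 ht) (rpowMeasure_Iic_zero (a := a))]
  · rw [Measure.smul_apply, rpowMeasure_Iic ha ht, hν t ht, smul_eq_mul, mul_assoc,
      ← ENNReal.ofReal_mul ha.le, mul_div_cancel₀ _ ha.ne', mul_comm]

theorem lintegral_exp_neg_rpowMeasure (ha : 0 < a) :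
    ∫⁻ t, ENNReal.ofReal (Real.exp (-t)) ∂rpowMeasure a = ENNReal.ofReal (Real.Gamma a) := by
  have hnonneg : 0 ≤ᵐ[volume.restrict (Ioi 0)] fun t : ℝ ↦ Real.exp (-t) * t ^ (a - 1) :=
    (ae_restrict_mem measurableSet_Ioi).mono fun t ht ↦
      mul_nonneg (Real.exp_nonneg _) (Real.rpow_nonneg (le_of_lt ht) _)
  rw [rpowMeasure, lintegral_withDensity_eq_lintegral_mul _ (by fun_prop) (by fun_prop),
    Real.Gamma_eq_integral ha,
    ofReal_integral_eq_lintegral_ofReal (Real.GammaIntegral_convergent ha) hnonneg]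
  refine lintegral_congr fun t ↦ ?_
  rw [ENNReal.ofReal_mul (Real.exp_nonneg _), Pi.mul_apply, mul_comm]

theorem integrable_rpowMeasure_iff {φ : ℝ → ℝ} :
    Integrable φ (rpowMeasure a) ↔ IntegrableOn (fun t ↦ φ t * t ^ (a - 1)) (Ioi 0) := by
  rw [rpowMeasure, integrable_withDensity_iff (by fun_prop) (by simp)]
  refine integrable_congr ((ae_restrict_mem measurableSet_Ioi).mono fun t ht ↦ ?_)
  simp only [ENNReal.toReal_ofReal (Real.rpow_nonneg (le_of_lt ht) _)]

theorem integral_rpowMeasure (a : ℝ) (φ : ℝ → ℝ) :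
    ∫ t, φ t ∂rpowMeasure a = ∫ t in Ioi 0, φ t * t ^ (a - 1) := by
  rw [rpowMeasure, integral_withDensity_eq_integral_toReal_smul (by fun_prop) (by simp)]
  refine integral_congr_ae ((ae_restrict_mem measurableSet_Ioi).mono fun t ht ↦ ?_)
  simp only [ENNReal.toReal_ofReal (Real.rpow_nonneg (le_of_lt ht) _), smul_eq_mul, mul_comm]

theorem memL1w1_iff_memLp {h : ℝ → ℝ} : MemL1w1 a h ↔ MemLp h 1 (rpowMeasure a) := by
  rw [memLp_one_iff_integrable, integrable_rpowMeasure_iff, MemL1w1]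

theorem normL1w1_eq_lpNorm {h : ℝ → ℝ} (hh : MemL1w1 a h) :
    normL1w1 a h = lpNorm h 1 (rpowMeasure a) := by
  rw [lpNorm_one_eq_integral_norm (memL1w1_iff_memLp.1 hh).1, integral_rpowMeasure]
  rfl

end HalfLine

section Polar

variable {n : ℕ} {c : Fin n → ℝ} {q : (Fin n → ℝ) → ℝ}

/-- A measurable positive function on the orthant, positively homogeneous of degree one: the part
of the cost-function conditions that determines the law of `q` under `orthantMeasure c` up to a
constant. -/
structure IsOrthantGauge (n : ℕ) (q : (Fin n → ℝ) → ℝ) : Prop where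
  aemeasurable : AEMeasurable q (volume.restrict (posOrth n))
  pos : ∀ x ∈ posOrth n, 0 < q x
  map_smul : ∀ t : ℝ, 0 < t → ∀ x ∈ posOrth n, q (t • x) = t * q x

namespace IsOrthantGauge

theorem aemeasurable_orthantMeasure (hq : IsOrthantGauge n q) (c : Fin n → ℝ) :
    AEMeasurable q (orthantMeasure c) :=
  hq.aemeasurable.mono_ac (withDensity_absolutelyContinuous _ _)

theorem orthantMeasure_sublevel (hq : IsOrthantGauge n q) (c : Fin n → ℝ) {t : ℝ} (ht : 0 < t) :
    orthantMeasure c {x | q x ≤ t} =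
      ENNReal.ofReal (t ^ ∑ i, c i) * orthantMeasure c {x | q x ≤ 1} := by
  let p : Fin n → ℝ := fun _ ↦ t
  have hp : p ∈ posOrth n := fun _ ↦ ht
  have hmeas : NullMeasurableSet {x | q x ≤ t} ((orthantMeasure c).map (p * ·)) := by
    rw [map_mul_left_orthantMeasure hp]
    exact (nullMeasurableSet_le (hq.aemeasurable_orthantMeasure c) aemeasurable_const).mono_ac
      Measure.smul_absolutelyContinuous
  have hpre : orthantMeasure c ((p * ·) ⁻¹' {x | q x ≤ t}) = orthantMeasure c {x | q x ≤ 1} := by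
    refine measure_congr (ae_mem_posOrth.mono fun x hx ↦ propext ?_)
    change q (t • x) ≤ t ↔ q x ≤ 1
    rw [hq.map_smul t ht x hx, mul_le_iff_le_one_right ht]
  rw [← hpre, ← Measure.map_apply₀ (by fun_prop) hmeas, map_mul_left_orthantMeasure hp,
    Measure.smul_apply, smul_eq_mul, ← mul_assoc, ← multiRpow_const c ht,
    ← ENNReal.ofReal_mul (multiRpow_pos c hp).le, ← multiRpow_add _ _ hp, add_neg_cancel,
    multiRpow_zero, ENNReal.ofReal_one, one_mul]

theorem map_orthantMeasure_of_sublevel_ne_top (hq : IsOrthantGauge n q) (hc : 0 < ∑ i, c i)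
    (hfin : orthantMeasure c {x | q x ≤ 1} ≠ ∞) :
    (orthantMeasure c).map q =
      (orthantMeasure c {x | q x ≤ 1} * ENNReal.ofReal (∑ i, c i)) • rpowMeasure (∑ i, c i) := by
  have hIic (t : ℝ) : (orthantMeasure c).map q (Iic t) = orthantMeasure c {x | q x ≤ t} :=
    Measure.map_apply_of_aemeasurable (hq.aemeasurable_orthantMeasure c) measurableSet_Iic
  have hzero : (orthantMeasure c).map q (Iic 0) = 0 := by
    rw [hIic, measure_eq_zero_iff_ae_notMem]
    exact ae_mem_posOrth.mono fun x hx ↦ (hq.pos x hx).not_ge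
  rw [← hIic 1] at hfin ⊢
  refine eq_smul_rpowMeasure_of_homogeneous hc hzero hfin fun t ht ↦ ?_
  rw [hIic, hIic, hq.orthantMeasure_sublevel c ht]

theorem lintegral_exp_neg (hq : IsOrthantGauge n q) (hc : 0 < ∑ i, c i)
    (hfin : orthantMeasure c {x | q x ≤ 1} ≠ ∞) :
    ∫⁻ x, ENNReal.ofReal (Real.exp (-q x)) ∂orthantMeasure c =
      orthantMeasure c {x | q x ≤ 1} * ENNReal.ofReal (∑ i, c i) *
        ENNReal.ofReal (Real.Gamma (∑ i, c i)) := by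
  rw [← lintegral_map' (f := fun t ↦ ENNReal.ofReal (Real.exp (-t))) (by fun_prop)
      (hq.aemeasurable_orthantMeasure c),
    hq.map_orthantMeasure_of_sublevel_ne_top hc hfin, lintegral_smul_measure,
    lintegral_exp_neg_rpowMeasure hc, smul_eq_mul]

theorem aestronglyMeasurable_exp_neg (hq : IsOrthantGauge n q) (c : Fin n → ℝ) :
    AEStronglyMeasurable (fun x ↦ Real.exp (-q x)) (orthantMeasure c) :=
  (Real.measurable_exp.comp_aemeasurable
    (hq.aemeasurable_orthantMeasure c).neg).aestronglyMeasurable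

theorem integrable_exp_neg_iff (hq : IsOrthantGauge n q) (hc : 0 < ∑ i, c i) :
    Integrable (fun x ↦ Real.exp (-q x)) (orthantMeasure c) ↔
      orthantMeasure c {x | q x ≤ 1} ≠ ∞ := by
  refine ⟨fun hexp ↦ ?_, fun hfin ↦ ?_⟩
  · simpa using (hexp.measure_ge_lt_top (Real.exp_pos (-1))).ne
  · refine ⟨hq.aestronglyMeasurable_exp_neg c, ?_⟩
    rw [hasFiniteIntegral_iff_ofReal (.of_forall fun x ↦ Real.exp_nonneg _),
      hq.lintegral_exp_neg hc hfin]
    finiteness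

theorem map_orthantMeasure (hq : IsOrthantGauge n q) (hc : 0 < ∑ i, c i)
    (hexp : Integrable (fun x ↦ Real.exp (-q x)) (orthantMeasure c)) :
    (orthantMeasure c).map q =
      ENNReal.ofReal ((Real.Gamma (∑ i, c i))⁻¹ * ∫ x, Real.exp (-q x) ∂orthantMeasure c) •
        rpowMeasure (∑ i, c i) := by
  have hΓ : 0 < Real.Gamma (∑ i, c i) := Real.Gamma_pos_of_pos hc
  have hfin := (hq.integrable_exp_neg_iff hc).1 hexp
  rw [ENNReal.ofReal_mul (inv_nonneg.2 hΓ.le), ENNReal.ofReal_inv_of_pos hΓ,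
    ofReal_integral_eq_lintegral_ofReal hexp (.of_forall fun x ↦ Real.exp_nonneg _),
    hq.lintegral_exp_neg hc hfin, mul_comm, ENNReal.mul_inv_cancel_right (by simpa)
    ENNReal.ofReal_ne_top, hq.map_orthantMeasure_of_sublevel_ne_top hc hfin]

theorem aestronglyMeasurable_comp (hq : IsOrthantGauge n q) (hc : 0 < ∑ i, c i)
    (hexp : Integrable (fun x ↦ Real.exp (-q x)) (orthantMeasure c)) {h : ℝ → ℝ}
    (hh : AEStronglyMeasurable h (rpowMeasure (∑ i, c i))) :
    AEStronglyMeasurable (h ∘ q) (orthantMeasure c) := by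
  refine AEStronglyMeasurable.comp_aemeasurable ?_ (hq.aemeasurable_orthantMeasure c)
  rw [hq.map_orthantMeasure hc hexp]
  exact hh.smul_measure _

theorem eLpNorm_one_comp (hq : IsOrthantGauge n q) (hc : 0 < ∑ i, c i)
    (hexp : Integrable (fun x ↦ Real.exp (-q x)) (orthantMeasure c)) {h : ℝ → ℝ}
    (hh : AEStronglyMeasurable h (rpowMeasure (∑ i, c i))) :
    eLpNorm (h ∘ q) 1 (orthantMeasure c) =
      ENNReal.ofReal ((Real.Gamma (∑ i, c i))⁻¹ * ∫ x, Real.exp (-q x) ∂orthantMeasure c) *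
        eLpNorm h 1 (rpowMeasure (∑ i, c i)) := by
  have hmap := hq.map_orthantMeasure hc hexp
  rw [← eLpNorm_map_measure (hmap ▸ hh.smul_measure _) (hq.aemeasurable_orthantMeasure c), hmap,
    eLpNorm_one_smul_measure]

end IsOrthantGauge

end Polar

section CostFunction

variable {n : ℕ} {c : Fin n → ℝ} {q : (Fin n → ℝ) → ℝ}

theorem orthantMeasure_pi_Iic_ne_top (hc : ∀ i, 0 < c i) (b : Fin n → ℝ) :
    orthantMeasure c (univ.pi fun i ↦ Iic (b i)) ≠ ∞ := by
  have hfactor (i : Fin n) : IntegrableOn (fun s : ℝ ↦ s ^ (c i - 1)) (Ioc 0 (b i)) :=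
    (intervalIntegral.intervalIntegrable_rpow' (by linarith [hc i])).1
  have hbox : IntegrableOn (multiRpow (c - 1)) (univ.pi fun i ↦ Ioc 0 (b i)) := by
    rw [IntegrableOn, volume_pi, Measure.restrict_pi_pi]
    exact Integrable.fintype_prod hfactor
  rw [orthantMeasure, withDensity_apply _ (.univ_pi fun _ ↦ measurableSet_Iic),
    Measure.restrict_restrict (.univ_pi fun _ ↦ measurableSet_Iic), posOrth_eq_pi,
    ← pi_inter_distrib]
  simpa only [Iic_inter_Ioi] using hbox.lintegral_lt_top.ne

namespace IsCostFun

theorem isOrthantGauge (hq : IsCostFun n q) : IsOrthantGauge n q where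
  aemeasurable := hq.1.continuousOn.aemeasurable measurableSet_posOrth
  pos := hq.2.1
  map_smul := hq.2.2.1

theorem exists_norm_le_mul (hq : IsCostFun n q) : ∃ M, ∀ x ∈ posOrth n, ‖x‖ ≤ M * q x := by
  obtain ⟨M, hM⟩ := (hq.2.2.2 1).exists_norm_le
  refine ⟨M, fun x hx ↦ ?_⟩
  have hqx : 0 < q x := hq.2.1 x hx
  have hlevel : q ((q x)⁻¹ • x) = 1 := by
    rw [hq.isOrthantGauge.map_smul _ (inv_pos.2 hqx) x hx, inv_mul_cancel₀ hqx.ne']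
  have hbound := hM _ ⟨smul_mem_posOrth (inv_pos.2 hqx) hx, hlevel⟩
  rwa [norm_smul, norm_inv, Real.norm_of_nonneg hqx.le, inv_mul_le_iff₀ hqx, mul_comm] at hbound

theorem orthantMeasure_sublevel_ne_top (hq : IsCostFun n q) (hc : ∀ i, 0 < c i) (t : ℝ) :
    orthantMeasure c {x | q x ≤ t} ≠ ∞ := by
  obtain ⟨M, hM⟩ := hq.exists_norm_le_mul
  refine ne_top_of_le_ne_top (orthantMeasure_pi_Iic_ne_top hc fun _ ↦ |M| * t)
    (measure_mono_ae (ae_mem_posOrth.mono fun x hx hxt i _ ↦ ?_))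
  calc x i ≤ ‖x‖ := (Real.le_norm_self _).trans (norm_le_pi_norm x i)
    _ ≤ M * q x := hM x hx
    _ ≤ |M| * t := mul_le_mul (le_abs_self M) hxt (hq.2.1 x hx).le (abs_nonneg M)

theorem integrable_exp_neg (hq : IsCostFun n q) (hc : ∀ i, 0 < c i) (hsum : 0 < ∑ i, c i) :
    Integrable (fun x ↦ Real.exp (-q x)) (orthantMeasure c) :=
  (hq.isOrthantGauge.integrable_exp_neg_iff hsum).2 (hq.orthantMeasure_sublevel_ne_top hc 1)

end IsCostFun

end CostFunction

section Operator

variable {n : ℕ} {c : Fin n → ℝ} {q f : (Fin n → ℝ) → ℝ} {h : ℝ → ℝ} {r : ℝ}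

theorem aestronglyMeasurable_Rhq (hq : IsOrthantGauge n q) (hc : 0 < ∑ i, c i)
    (hexp : Integrable (fun x ↦ Real.exp (-q x)) (orthantMeasure c))
    (hh : AEStronglyMeasurable h (rpowMeasure (∑ i, c i)))
    (hf : AEStronglyMeasurable f (volume.restrict (posOrth n))) :
    AEStronglyMeasurable (Rhq n q h f) (volume.restrict (posOrth n)) :=
  aestronglyMeasurable_setIntegral_posOrth_comp_mul
    (aestronglyMeasurable_orthantMeasure_iff.1 (hq.aestronglyMeasurable_comp hc hexp hh)) hf

theorem eLpNorm_Rhq_le (hq : IsOrthantGauge n q) (hc : 0 < ∑ i, c i)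
    (hexp : Integrable (fun x ↦ Real.exp (-q x)) (orthantMeasure c))
    (hh : AEStronglyMeasurable h (rpowMeasure (∑ i, c i)))
    (hf : AEStronglyMeasurable f (volume.restrict (posOrth n))) (hr : 1 ≤ r) :
    eLpNorm (Rhq n q h f) (ENNReal.ofReal r) (orthantMeasure (r • c)) ≤
      ENNReal.ofReal ((Real.Gamma (∑ i, c i))⁻¹ * ∫ x, Real.exp (-q x) ∂orthantMeasure c) *
        eLpNorm h 1 (rpowMeasure (∑ i, c i)) *
          eLpNorm f (ENNReal.ofReal r) (orthantMeasure (r • (1 - c))) := by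
  rw [← hq.eLpNorm_one_comp hc hexp hh]
  exact eLpNorm_setIntegral_posOrth_comp_mul_le
    (aestronglyMeasurable_orthantMeasure_iff.1 (hq.aestronglyMeasurable_comp hc hexp hh)) hf hr c

end Operator

theorem norm_Rhq_le_general {n : ℕ} {q : (Fin n → ℝ) → ℝ} (hq : IsOrthantGauge n q)
    {c : Fin n → ℝ} {α : ℝ} (hα : α = ∑ i, c i) (hα_pos : 0 < α)
    (hexp : IntegrableOn (fun x ↦ Real.exp (-q x) * ∏ i, x i ^ (c i - 1)) (posOrth n))
    {r : ℝ} (hr : 1 ≤ r) {h : ℝ → ℝ} (hh : MemL1w1 α h)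
    {f : (Fin n → ℝ) → ℝ} (hf : MemLrw n r (fun i ↦ 1 - c i) f) :
    normLrw n r c (Rhq n q h f) ≤
        (Real.Gamma α)⁻¹ * (∫ x in posOrth n, Real.exp (-q x) * ∏ i, x i ^ (c i - 1)) *
          normL1w1 α h * normLrw n r (fun i ↦ 1 - c i) f ∧
      MemLrw n r c (Rhq n q h f) := by
  subst hα
  have hr_pos : 0 < r := one_pos.trans_le hr
  rw [integrableOn_posOrth_mul_prod_rpow_iff] at hexp
  rw [setIntegral_posOrth_mul_prod_rpow]
  set κ := (Real.Gamma (∑ i, c i))⁻¹ * ∫ x, Real.exp (-q x) ∂orthantMeasure c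
  have hκ : 0 ≤ κ := mul_nonneg (inv_nonneg.2 (Real.Gamma_pos_of_pos hα_pos).le)
    (integral_nonneg fun x ↦ Real.exp_nonneg _)
  have hhLp := memL1w1_iff_memLp.1 hh
  have hfLp := (memLrw_iff_memLp hr_pos).1 hf
  have hmeas := aestronglyMeasurable_Rhq hq hα_pos hexp hhLp.1 hf.1
  have hbound := eLpNorm_Rhq_le hq hα_pos hexp hhLp.1 hf.1 hr
  have hbound_ne_top := ENNReal.mul_ne_top (ENNReal.mul_ne_top (ENNReal.ofReal_ne_top (r := κ))
    hhLp.eLpNorm_ne_top) hfLp.eLpNorm_ne_top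
  have hRLp : MemLp (Rhq n q h f) (ENNReal.ofReal r) (orthantMeasure (r • c)) :=
    ⟨aestronglyMeasurable_orthantMeasure_iff.2 hmeas, hbound.trans_lt hbound_ne_top.lt_top⟩
  refine ⟨?_, (memLrw_iff_memLp hr_pos).2 hRLp⟩
  rw [normLrw_eq_lpNorm hr_pos hmeas, normLrw_eq_lpNorm hr_pos hf.1, normL1w1_eq_lpNorm hh,
    ← toReal_eLpNorm hRLp.1, ← toReal_eLpNorm hhLp.1, ← toReal_eLpNorm hfLp.1,
    ← ENNReal.toReal_ofReal hκ, ← ENNReal.toReal_mul, ← ENNReal.toReal_mul]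
  exact ENNReal.toReal_mono hbound_ne_top hbound

/-- Estimate: `‖R^h_q f‖_{r,c} ≤ Γ(α)⁻¹ ‖e^{-q}‖_{1,c} ‖h‖_{1,α} ‖f‖_{r,I-c}` for
`f ∈ L^r_{I-c}(ℝ^n_+) ∩ C(ℝ^n_+)`; in particular `R^h_q f ∈ L^r_c(ℝ^n_+)`. -/
theorem norm_Rhq_le
    (n : ℕ) (hn : 2 ≤ n) (q : (Fin n → ℝ) → ℝ) (hq : IsCostFun n q)
    (c : Fin n → ℝ) (hc : ∀ i, 0 < c i) (α : ℝ) (hα : α = ∑ i, c i)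
    (r : ℝ) (hr : 1 ≤ r)
    (h : ℝ → ℝ) (hh : MemL1w1 α h)
    (f : (Fin n → ℝ) → ℝ) (hf : MemLrw n r (fun i => 1 - c i) f)
    (hfc : ContinuousOn f (posOrth n)) :
    normLrw n r c (Rhq n q h f) ≤
        (Real.Gamma α)⁻¹ * (∫ x in posOrth n, Real.exp (-q x) * ∏ i, x i ^ (c i - 1)) *
          normL1w1 α h * normLrw n r (fun i => 1 - c i) f ∧
      MemLrw n r c (Rhq n q h f) := by
  have : NeZero n := ⟨by lia⟩
  have hα_pos : 0 < ∑ i, c i := Finset.sum_pos (fun i _ ↦ hc i) Finset.univ_nonempty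
  exact norm_Rhq_le_general hq.isOrthantGauge hα (hα ▸ hα_pos)
    (integrableOn_posOrth_mul_prod_rpow_iff.2 (hq.integrable_exp_neg hc hα_pos)) hr hh hf
end
end

section
/- Let n ≥ 2, let q : ℝ^n_+ → ℝ satisfy the cost-function conditions, let c ∈ ℝ^n_+, set α = c_1 + ⋯ + c_n, and let h ∈ L^1_α(ℝ^1_+). Then for every x ∈ ℝ^n_+ and every z ∈ ℂ^n with Re z = c, writing s = z_1 + ⋯ + z_n, one has Γ(s) · ∫_{ℝ^n_+} p^{z−I} h(q(p_1x_1,…,p_nx_n)) dp = x^{−z} · (∫_{ℝ^n_+} p^{z−I} e^{−q(p)} dp) · (∫_0^∞ t^{s−1} h(t) dt), where Γ is the Gamma function. -/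
open MeasureTheory Complex Set

noncomputable section

/-!
In logarithmic coordinates `p = exp y`, `t = exp u`, the integral over the orthant becomes
`∫ e^{⟨y, z⟩} h (exp (Q y)) dy`, and homogeneity of `q` becomes `Q (y + l • 1) = Q y + l` for
`Q = log ∘ q ∘ exp`. The map `(y, u) ↦ (y + (u - Q y) • 1, Q y)` exchanges `Q y` with `u`; it is a
measure-preserving involution under which `⟨y, z⟩ + u * ∑ zᵢ` is invariant. Hence in the product of
an orthant integral of `f ∘ q` with the Mellin transform of `g`, the functions `f` and `g` may be
interchanged. The theorem is the case `g = e^{-t}`, whose Mellin transform is `Γ`.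
-/

section LevelSwap

lemma measurePreserving_prod_add_comp {X G : Type*} [MeasurableSpace X] [MeasurableSpace G] [Add G]
    [MeasurableAdd₂ G] {μ : Measure X} {ν : Measure G} [SFinite μ] [SFinite ν]
    [ν.IsAddRightInvariant] {φ : X → G} (hφ : Measurable φ) :
    MeasurePreserving (fun w : X × G => (w.1, w.2 + φ w.1)) (μ.prod ν) (μ.prod ν) :=
  (MeasurePreserving.id μ).skew_product (g := fun a b => b + φ a)
    (measurable_snd.add (hφ.comp measurable_fst))
    (.of_forall fun a => (measurePreserving_add_right ν (φ a)).map_eq)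

variable {E : Type*} [AddCommGroup E] [Module ℝ E]

/-- The map of `E × ℝ` that moves `y` along `v` and exchanges the value `Q y` with the real
coordinate, provided that `Q (y + l • v) = Q y + l`. -/
def levelSwap (Q : E → ℝ) (v : E) (w : E × ℝ) : E × ℝ :=
  (w.1 + (w.2 - Q w.1) • v, Q w.1)

variable {Q : E → ℝ} {v : E}

lemma apply_levelSwap_fst (hQv : ∀ y (l : ℝ), Q (y + l • v) = Q y + l) (w : E × ℝ) :
    Q (levelSwap Q v w).1 = w.2 := by
  simp [levelSwap, hQv]

lemma levelSwap_involutive (hQv : ∀ y (l : ℝ), Q (y + l • v) = Q y + l) :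
    Function.Involutive (levelSwap Q v) := fun w => by
  refine Prod.ext ?_ (apply_levelSwap_fst hQv w)
  change (levelSwap Q v w).1 + (Q w.1 - Q (levelSwap Q v w).1) • v = w.1
  rw [apply_levelSwap_fst hQv, levelSwap, add_assoc, ← add_smul]
  simp

/-- The integrand on `E × ℝ` of the product of `∫ e^{L y} f (Q y) dy` and `∫ e^{t L v} g t dt`. -/
def laplaceProd (L : E →ₗ[ℝ] ℂ) (Q : E → ℝ) (v : E) (f g : ℝ → ℂ) (w : E × ℝ) : ℂ :=
  (cexp (L w.1) * f (Q w.1)) * (cexp (w.2 * L v) * g w.2)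

lemma laplaceProd_comp_levelSwap (hQv : ∀ y (l : ℝ), Q (y + l • v) = Q y + l) (L : E →ₗ[ℝ] ℂ)
    (f g : ℝ → ℂ) : laplaceProd L Q v f g ∘ levelSwap Q v = laplaceProd L Q v g f := by
  funext w
  have exponent_invariant : L (levelSwap Q v w).1 + (levelSwap Q v w).2 * L v
      = L w.1 + w.2 * L v := by
    simp only [levelSwap, map_add, map_smul, real_smul, ofReal_sub]
    ring
  have exp_invariant := congrArg cexp exponent_invariant
  rw [Complex.exp_add, Complex.exp_add] at exp_invariant
  simp only [Function.comp_apply, laplaceProd, apply_levelSwap_fst hQv]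
  change _ * (_ * g (Q w.1)) = _
  linear_combination (f w.2 * g (Q w.1)) * exp_invariant

variable [MeasurableSpace E] {μ : Measure E} [SFinite μ]

lemma integral_laplaceProd (L : E →ₗ[ℝ] ℂ) (Q : E → ℝ) (v : E) (f g : ℝ → ℂ) :
    ∫ w, laplaceProd L Q v f g w ∂μ.prod volume
      = (∫ y, cexp (L y) * f (Q y) ∂μ) * ∫ t : ℝ, cexp (t * L v) * g t :=
  integral_prod_mul (fun y => cexp (L y) * f (Q y)) fun t : ℝ => cexp (t * L v) * g t

variable [MeasurableAdd₂ E] [MeasurableSMul ℝ E] [μ.IsAddRightInvariant]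

lemma measurePreserving_levelSwap (hQ : Measurable Q)
    (hQv : ∀ y (l : ℝ), Q (y + l • v) = Q y + l) :
    MeasurePreserving (levelSwap Q v) (μ.prod volume) (μ.prod volume) := by
  have subtract_level : MeasurePreserving (fun w : E × ℝ => (w.1, w.2 + -Q w.1))
      (μ.prod volume) (μ.prod volume) := measurePreserving_prod_add_comp hQ.neg
  have translate_along_v : MeasurePreserving (fun w : ℝ × E => (w.1, w.2 + w.1 • v))
      (volume.prod μ) (volume.prod μ) :=
    measurePreserving_prod_add_comp (measurable_id.smul_const v)
  have negate : MeasurePreserving (Prod.map id Neg.neg : E × ℝ → E × ℝ)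
      (μ.prod volume) (μ.prod volume) :=
    (MeasurePreserving.id μ).prod (Measure.measurePreserving_neg volume)
  have add_level : MeasurePreserving (fun w : E × ℝ => (w.1, w.2 + Q w.1))
      (μ.prod volume) (μ.prod volume) := measurePreserving_prod_add_comp hQ
  convert add_level.comp <| negate.comp <| Measure.measurePreserving_swap.comp <|
    translate_along_v.comp <| Measure.measurePreserving_swap.comp subtract_level using 1
  funext w
  simp [levelSwap, hQv, sub_eq_add_neg]

lemma integral_exp_mul_comp_mul_integral_comm (hQ : Measurable Q)
    (hQv : ∀ y (l : ℝ), Q (y + l • v) = Q y + l) (L : E →ₗ[ℝ] ℂ) (f g : ℝ → ℂ) :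
    (∫ y, cexp (L y) * f (Q y) ∂μ) * (∫ t : ℝ, cexp (t * L v) * g t)
      = (∫ y, cexp (L y) * g (Q y) ∂μ) * (∫ t : ℝ, cexp (t * L v) * f t) := by
  have preserves := measurePreserving_levelSwap (μ := μ) hQ hQv
  let e := MeasurableEquiv.ofInvolutive _ (levelSwap_involutive hQv) preserves.measurable
  calc
    _ = ∫ w, laplaceProd L Q v f g w ∂μ.prod volume := (integral_laplaceProd ..).symm
    _ = ∫ w, laplaceProd L Q v f g (levelSwap Q v w) ∂μ.prod volume :=
      (MeasurePreserving.integral_comp' (f := e) preserves _).symm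
    _ = ∫ w, laplaceProd L Q v g f w ∂μ.prod volume := by
      rw [← laplaceProd_comp_levelSwap hQv L f g]
      rfl
    _ = _ := integral_laplaceProd ..

lemma integrable_exp_mul_comp_of_integrable (hQ : Measurable Q)
    (hQv : ∀ y (l : ℝ), Q (y + l • v) = Q y + l) {L : E →ₗ[ℝ] ℂ} {f g : ℝ → ℂ}
    (hg₀ : ∀ t, g t ≠ 0) (hg : Integrable (fun y => cexp (L y) * g (Q y)) μ)
    (hf : Integrable fun t : ℝ => cexp (t * L v) * f t) :
    Integrable (fun y => cexp (L y) * f (Q y)) μ := by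
  have integrable_prod : Integrable (laplaceProd L Q v f g) (μ.prod volume) := by
    rw [← laplaceProd_comp_levelSwap hQv L g f]
    have integrable_swapped : Integrable (laplaceProd L Q v g f) (μ.prod volume) := hg.mul_prod hf
    exact (measurePreserving_levelSwap hQ hQv).integrable_comp_of_integrable integrable_swapped
  obtain ⟨t, integrable_slice⟩ := integrable_prod.prod_left_ae.exists
  have factor_isUnit : IsUnit (cexp (t * L v) * g t) :=
    (mul_ne_zero (Complex.exp_ne_zero _) (hg₀ t)).isUnit
  exact (integrable_mul_const_iff factor_isUnit _).1 integrable_slice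

end LevelSwap

lemma ofReal_exp_cpow (y : ℝ) (w : ℂ) : (Real.exp y : ℂ) ^ w = cexp (y * w) := by
  rw [cpow_def_of_ne_zero (ofReal_ne_zero.2 (Real.exp_pos y).ne'),
    ← ofReal_log (Real.exp_pos y).le, Real.log_exp]

lemma exp_mul_exp_cpow_sub_one (y : ℝ) (s : ℂ) :
    (Real.exp y : ℂ) * (Real.exp y : ℂ) ^ (s - 1) = cexp (y * s) := by
  rw [ofReal_exp_cpow, ofReal_exp, ← Complex.exp_add]
  ring_nf

lemma mellin_eq_integral_exp (f : ℝ → ℂ) (s : ℂ) :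
    mellin f s = ∫ y : ℝ, cexp (y * s) * f (Real.exp y) := by
  rw [mellin, ← Real.range_exp, ← image_univ, integral_image_eq_integral_abs_deriv_smul .univ
    (fun y _ => (Real.hasDerivAt_exp y).hasDerivWithinAt) Real.exp_injective.injOn,
    Measure.restrict_univ]
  simp only [abs_of_pos (Real.exp_pos _), real_smul, smul_eq_mul, ← mul_assoc,
    exp_mul_exp_cpow_sub_one]

lemma mellinConvergent_iff_integrable_exp {f : ℝ → ℂ} {s : ℂ} :
    MellinConvergent f s ↔ Integrable fun y : ℝ => cexp (y * s) * f (Real.exp y) := by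
  rw [MellinConvergent, ← Real.range_exp, ← image_univ,
    integrableOn_image_iff_integrableOn_abs_deriv_smul .univ
    (fun y _ => (Real.hasDerivAt_exp y).hasDerivWithinAt) Real.exp_injective.injOn,
    integrableOn_univ]
  simp only [abs_of_pos (Real.exp_pos _), real_smul, smul_eq_mul, ← mul_assoc,
    exp_mul_exp_cpow_sub_one]

lemma mellinConvergent_exp_neg {s : ℂ} (hs : 0 < s.re) :
    MellinConvergent (fun t => (Real.exp (-t) : ℂ)) s := by
  simpa only [MellinConvergent, smul_eq_mul, mul_comm] using GammaIntegral_convergent hs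

lemma MemL1w1.mellinConvergent {h : ℝ → ℝ} {s : ℂ} (hh : MemL1w1 s.re h) :
    MellinConvergent (fun t => (h t : ℂ)) s := by
  have phase_bounded : ∀ᵐ t : ℝ ∂volume.restrict (Ioi 0), ‖(t : ℂ) ^ (s - s.re)‖ ≤ 1 := by
    filter_upwards [ae_restrict_mem measurableSet_Ioi] with t ht
    simp [norm_cpow_eq_rpow_re_of_pos ht]
  have phase_measurable : AEStronglyMeasurable (fun t : ℝ => (t : ℂ) ^ (s - s.re))
      (volume.restrict (Ioi 0)) := (measurable_ofReal.pow_const _).aestronglyMeasurable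
  refine (hh.ofReal (𝕜 := ℂ).bdd_mul phase_measurable phase_bounded).congr ?_
  filter_upwards [ae_restrict_mem measurableSet_Ioi] with t (ht : 0 < t)
  have cpow_split : (t : ℂ) ^ (s - 1) = (t : ℂ) ^ (s - s.re) * (t : ℂ) ^ ((s.re : ℂ) - 1) := by
    rw [← cpow_add _ _ (ofReal_ne_zero.2 ht.ne'), sub_add_sub_cancel]
  simp only [coe_algebraMap, ofReal_mul, ofReal_cpow ht.le, ofReal_sub, ofReal_one, cpow_split,
    smul_eq_mul]
  ring

section MultiMellin

variable {ι : Type*}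

/-- The positive orthant with an arbitrary index type; `orthant (Fin n)` is `posOrth n` by
definition. -/
def orthant (ι : Type*) : Set (ι → ℝ) := {p | ∀ i, 0 < p i}

/-- Coordinatewise exponential, parametrizing the positive orthant by logarithmic coordinates. -/
def expPi (y : ι → ℝ) : ι → ℝ := fun i => Real.exp (y i)

lemma expPi_mem_orthant (y : ι → ℝ) : expPi y ∈ orthant ι := fun i => Real.exp_pos (y i)

lemma expPi_injective : Function.Injective (expPi : (ι → ℝ) → ι → ℝ) :=
  Real.exp_injective.comp_left

lemma expPi_image_univ : expPi '' univ = orthant ι := by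
  refine Subset.antisymm (image_subset_iff.2 fun y _ => expPi_mem_orthant y) fun p hp => ?_
  exact ⟨fun i => Real.log (p i), mem_univ _, funext fun i => Real.exp_log (hp i)⟩

/-- Measurable positive functions on the positive orthant that are homogeneous of degree one.
Nothing is required of `q` outside the orthant. -/
structure IsPosHomogeneous (q : (ι → ℝ) → ℝ) : Prop where
  measurable : Measurable ((orthant ι).domRestrict q)
  pos : ∀ p ∈ orthant ι, 0 < q p
  homogeneous : ∀ a : ℝ, 0 < a → ∀ p ∈ orthant ι, q (a • p) = a * q p

/-- The function `q` read in logarithmic coordinates on both its domain and its values. -/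
def logConj (q : (ι → ℝ) → ℝ) (y : ι → ℝ) : ℝ := Real.log (q (expPi y))

namespace IsPosHomogeneous

variable {q : (ι → ℝ) → ℝ}

lemma exp_logConj (hq : IsPosHomogeneous q) (y : ι → ℝ) :
    Real.exp (logConj q y) = q (expPi y) :=
  Real.exp_log (hq.pos _ (expPi_mem_orthant y))

lemma measurable_logConj (hq : IsPosHomogeneous q) : Measurable (logConj q) := by
  have measurable_expPi : Measurable (expPi : (ι → ℝ) → ι → ℝ) := by
    unfold expPi
    fun_prop
  exact (hq.measurable.comp (measurable_expPi.subtype_mk (h := expPi_mem_orthant))).log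

lemma logConj_add_smul_one (hq : IsPosHomogeneous q) (y : ι → ℝ) (l : ℝ) :
    logConj q (y + l • 1) = logConj q y + l := by
  have expPi_add : expPi (y + l • 1) = Real.exp l • expPi y := by
    funext i
    simp [expPi, Real.exp_add, mul_comm]
  rw [logConj, expPi_add, hq.homogeneous _ (Real.exp_pos l) _ (expPi_mem_orthant y),
    Real.log_mul (Real.exp_pos l).ne' (hq.pos _ (expPi_mem_orthant y)).ne', Real.log_exp, add_comm,
    logConj]

end IsPosHomogeneous

lemma hasFDerivAt_expPi [Finite ι] (y : ι → ℝ) :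
    HasFDerivAt expPi (ContinuousLinearMap.pi fun i =>
      (Real.exp (y i) • ContinuousLinearMap.id ℝ ℝ).comp (.proj i)) y := by
  cases nonempty_fintype ι
  exact hasFDerivAt_pi.2 fun i => (hasFDerivAt_apply i y).exp

variable [Fintype ι]

lemma abs_det_fderiv_expPi (y : ι → ℝ) :
    |(ContinuousLinearMap.pi fun i =>
      (Real.exp (y i) • ContinuousLinearMap.id ℝ ℝ).comp (.proj i)).det| = ∏ i, expPi y i := by
  rw [ContinuousLinearMap.det_pi]
  simp [ContinuousLinearMap.det, Finset.abs_prod, expPi]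

/-- The Mellin transform `∫ p^{z - I} F p dp` of a function on the positive orthant. -/
def multiMellin (F : (ι → ℝ) → ℂ) (z : ι → ℂ) : ℂ :=
  ∫ p in orthant ι, (∏ i, (p i : ℂ) ^ (z i - 1)) * F p

/-- Absolute convergence of the integral defining `multiMellin F z`. -/
def MultiMellinConvergent (F : (ι → ℝ) → ℂ) (z : ι → ℂ) : Prop :=
  IntegrableOn (fun p => (∏ i, (p i : ℂ) ^ (z i - 1)) * F p) (orthant ι)

lemma prod_expPi_smul_prod_cpow_mul (y : ι → ℝ) (z : ι → ℂ) (a : ℂ) :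
    (∏ i, expPi y i) • ((∏ i, (expPi y i : ℂ) ^ (z i - 1)) * a)
      = cexp (Fintype.linearCombination ℝ z y) * a := by
  rw [real_smul, ← mul_assoc, ofReal_prod, ← Finset.prod_mul_distrib,
    Fintype.linearCombination_apply, Complex.exp_sum]
  simp only [expPi, exp_mul_exp_cpow_sub_one, real_smul]

lemma multiMellin_eq_integral_exp (F : (ι → ℝ) → ℂ) (z : ι → ℂ) :
    multiMellin F z = ∫ y, cexp (Fintype.linearCombination ℝ z y) * F (expPi y) := by
  rw [multiMellin, ← expPi_image_univ, integral_image_eq_integral_abs_det_fderiv_smul volume .univ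
    (fun y _ => (hasFDerivAt_expPi y).hasFDerivWithinAt) expPi_injective.injOn,
    Measure.restrict_univ]
  simp only [abs_det_fderiv_expPi, prod_expPi_smul_prod_cpow_mul]

lemma multiMellinConvergent_iff_integrable_exp {F : (ι → ℝ) → ℂ} {z : ι → ℂ} :
    MultiMellinConvergent F z ↔
      Integrable fun y => cexp (Fintype.linearCombination ℝ z y) * F (expPi y) := by
  rw [MultiMellinConvergent, ← expPi_image_univ,
    integrableOn_image_iff_integrableOn_abs_det_fderiv_smul volume .univ
    (fun y _ => (hasFDerivAt_expPi y).hasFDerivWithinAt) expPi_injective.injOn, integrableOn_univ]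
  simp only [abs_det_fderiv_expPi, prod_expPi_smul_prod_cpow_mul]

lemma exp_mul_comp_expPi_mul_eq {x : ι → ℝ} (hx : x ∈ orthant ι) (F : (ι → ℝ) → ℂ) (z : ι → ℂ)
    (y : ι → ℝ) :
    cexp (Fintype.linearCombination ℝ z y) * F (expPi y * x)
      = (∏ i, (x i : ℂ) ^ (-z i)) *
        (cexp (Fintype.linearCombination ℝ z (y + fun i => Real.log (x i))) *
          F (expPi (y + fun i => Real.log (x i)))) := by
  have expPi_translate : expPi (y + fun i => Real.log (x i)) = expPi y * x := by
    funext i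
    simp [expPi, Real.exp_add, Real.exp_log (hx i)]
  have prod_cpow : ∏ i, (x i : ℂ) ^ (-z i)
      = cexp (-Fintype.linearCombination ℝ z fun i => Real.log (x i)) := by
    rw [Fintype.linearCombination_apply, ← Finset.sum_neg_distrib, Complex.exp_sum]
    refine Finset.prod_congr rfl fun i _ => ?_
    rw [real_smul, ← mul_neg, ← ofReal_exp_cpow, Real.exp_log (hx i)]
  rw [expPi_translate, prod_cpow, ← mul_assoc, ← Complex.exp_add, map_add,
    neg_add_cancel_comm_assoc]

lemma multiMellin_comp_mul_right {x : ι → ℝ} (hx : x ∈ orthant ι) (F : (ι → ℝ) → ℂ) (z : ι → ℂ) :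
    multiMellin (fun p => F (p * x)) z = (∏ i, (x i : ℂ) ^ (-z i)) * multiMellin F z := by
  simp only [multiMellin_eq_integral_exp, exp_mul_comp_expPi_mul_eq hx F z]
  rw [integral_const_mul, integral_add_right_eq_self
    (fun y => cexp (Fintype.linearCombination ℝ z y) * F (expPi y))]

lemma MultiMellinConvergent.comp_mul_right {x : ι → ℝ} (hx : x ∈ orthant ι) {F : (ι → ℝ) → ℂ}
    {z : ι → ℂ} (hF : MultiMellinConvergent F z) :
    MultiMellinConvergent (fun p => F (p * x)) z := by
  rw [multiMellinConvergent_iff_integrable_exp] at hF ⊢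
  simp only [exp_mul_comp_expPi_mul_eq hx F z]
  exact (hF.comp_add_right _).const_mul _

lemma multiMellinConvergent_prod {f : ι → ℝ → ℂ} {z : ι → ℂ}
    (hf : ∀ i, MellinConvergent (f i) (z i)) :
    MultiMellinConvergent (fun p => ∏ i, f i (p i)) z := by
  have orthant_eq_pi : orthant ι = univ.pi fun _ => Ioi 0 := by
    ext p
    simp [orthant]
  rw [MultiMellinConvergent, IntegrableOn, orthant_eq_pi, volume_pi, Measure.restrict_pi_pi]
  simp only [← Finset.prod_mul_distrib]
  exact Integrable.fintype_prod hf

lemma multiMellinConvergent_exp_neg_of_le {q : (ι → ℝ) → ℝ} {k : ℝ} {z : ι → ℂ}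
    (hq : Measurable ((orthant ι).domRestrict q)) (hk : 0 < k)
    (hkq : ∀ p ∈ orthant ι, k * ∑ i, p i ≤ q p) (hz : ∀ i, 0 < (z i).re) :
    MultiMellinConvergent (fun p => (Real.exp (-q p) : ℂ)) z := by
  have measurableSet_orthant : MeasurableSet (orthant ι) := by
    simp only [orthant, ofPred_forall]
    exact .iInter fun i => measurableSet_lt measurable_const (measurable_pi_apply i)
  have product_convergent : MultiMellinConvergent (fun p => ∏ i, (Real.exp (-(k * p i)) : ℂ)) z :=
    multiMellinConvergent_prod (f := fun _ t => (Real.exp (-(k * t)) : ℂ)) fun i =>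
      (MellinConvergent.comp_mul_left (f := fun t => (Real.exp (-t) : ℂ)) hk).2
        (mellinConvergent_exp_neg (hz i))
  have quotient_bounded : ∀ᵐ p ∂volume.restrict (orthant ι),
      ‖(Real.exp (k * ∑ i, p i - q p) : ℂ)‖ ≤ 1 := by
    filter_upwards [ae_restrict_mem measurableSet_orthant] with p hp
    simpa [Complex.norm_exp] using hkq p hp
  have aemeasurable_q : AEMeasurable q (volume.restrict (orthant ι)) :=
    aemeasurable_restrict_of_measurable_subtype measurableSet_orthant hq
  have quotient_measurable : AEStronglyMeasurable
      (fun p => (Real.exp (k * ∑ i, p i - q p) : ℂ)) (volume.restrict (orthant ι)) :=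
    AEMeasurable.aestronglyMeasurable (by fun_prop)
  have exp_split (p : ι → ℝ) : Real.exp (-q p)
      = Real.exp (k * ∑ i, p i - q p) * ∏ i, Real.exp (-(k * p i)) := by
    rw [← Real.exp_sum, ← Real.exp_add, Finset.sum_neg_distrib, ← Finset.mul_sum]
    ring_nf
  simp only [MultiMellinConvergent, exp_split, ofReal_mul, ofReal_prod, mul_left_comm _ (ofReal _)]
  exact product_convergent.bdd_mul quotient_measurable quotient_bounded

namespace IsPosHomogeneous

variable {q : (ι → ℝ) → ℝ}

lemma multiMellin_comp_mul_mellin_comm (hq : IsPosHomogeneous q) (z : ι → ℂ) (f g : ℝ → ℂ) :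
    multiMellin (fun p => f (q p)) z * mellin g (∑ i, z i)
      = multiMellin (fun p => g (q p)) z * mellin f (∑ i, z i) := by
  have exchange := integral_exp_mul_comp_mul_integral_comm (μ := volume)
    hq.measurable_logConj hq.logConj_add_smul_one (Fintype.linearCombination ℝ z)
    (fun t => f (Real.exp t)) (fun t => g (Real.exp t))
  simpa [multiMellin_eq_integral_exp, mellin_eq_integral_exp, hq.exp_logConj,
    Fintype.linearCombination_apply] using exchange

lemma multiMellinConvergent_comp (hq : IsPosHomogeneous q) {z : ι → ℂ} {f g : ℝ → ℂ}
    (hg₀ : ∀ t, 0 < t → g t ≠ 0) (hg : MultiMellinConvergent (fun p => g (q p)) z)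
    (hf : MellinConvergent f (∑ i, z i)) : MultiMellinConvergent (fun p => f (q p)) z := by
  rw [multiMellinConvergent_iff_integrable_exp] at hg ⊢
  rw [mellinConvergent_iff_integrable_exp] at hf
  simp only [← hq.exp_logConj] at hg ⊢
  exact integrable_exp_mul_comp_of_integrable (f := fun t => f (Real.exp t))
    (g := fun t => g (Real.exp t)) hq.measurable_logConj hq.logConj_add_smul_one
    (fun t => hg₀ _ (Real.exp_pos t)) hg
    (by simpa [Fintype.linearCombination_apply] using hf)

end IsPosHomogeneous

theorem gamma_mul_mellin_h_comp_q_eq_general {q : (ι → ℝ) → ℝ} (hq : IsPosHomogeneous q)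
    {z : ι → ℂ} (hz : 0 < (∑ i, z i).re)
    (hexp : MultiMellinConvergent (fun p => (Real.exp (-q p) : ℂ)) z)
    {h : ℝ → ℂ} (hh : MellinConvergent h (∑ i, z i)) {x : ι → ℝ} (hx : x ∈ orthant ι) :
    MultiMellinConvergent (fun p => h (q (p * x))) z ∧
      Complex.Gamma (∑ i, z i) * multiMellin (fun p => h (q (p * x))) z
        = (∏ i, (x i : ℂ) ^ (-z i)) * multiMellin (fun p => (Real.exp (-q p) : ℂ)) z *
          mellin h (∑ i, z i) := by
  have convergent : MultiMellinConvergent (fun p => h (q p)) z :=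
    hq.multiMellinConvergent_comp (g := fun t => (Real.exp (-t) : ℂ))
      (fun t _ => ofReal_ne_zero.2 (Real.exp_pos _).ne') hexp hh
  have exchange := hq.multiMellin_comp_mul_mellin_comm z h fun t => (Real.exp (-t) : ℂ)
  refine ⟨convergent.comp_mul_right hx, ?_⟩
  rw [multiMellin_comp_mul_right hx (fun p => h (q p)), Gamma_eq_integral hz,
    GammaIntegral_eq_mellin]
  linear_combination (∏ i, (x i : ℂ) ^ (-z i)) * exchange

end MultiMellin

namespace IsCostFun

variable {n : ℕ} {q : (Fin n → ℝ) → ℝ}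

lemma isPosHomogeneous (hq : IsCostFun n q) : IsPosHomogeneous q where
  measurable := hq.1.continuousOn.domRestrict.measurable
  pos := hq.2.1
  homogeneous := hq.2.2.1

lemma exists_pos_mul_sum_le (hq : IsCostFun n q) :
    ∃ k > 0, ∀ p ∈ posOrth n, k * ∑ i, p i ≤ q p := by
  obtain ⟨-, hpos, hhom, hbounded⟩ := hq
  obtain ⟨R, hR, norm_le⟩ := (hbounded 1).exists_pos_norm_le
  have sum_le_of_level_one : ∀ p ∈ posOrth n, q p = 1 → ∑ i, p i ≤ n * R + 1 := fun p hp hp1 =>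
    calc
      ∑ i, p i ≤ ∑ i, ‖p i‖ := Finset.sum_le_sum fun i _ => Real.le_norm_self _
      _ ≤ n * ‖p‖ := by simpa using Pi.sum_norm_apply_le_norm p
      _ ≤ n * R := by gcongr; exact norm_le p ⟨hp, hp1⟩
      _ ≤ n * R + 1 := le_add_of_nonneg_right zero_le_one
  have hK : 0 < n * R + 1 := by positivity
  refine ⟨(n * R + 1)⁻¹, inv_pos.2 hK, fun p hp => ?_⟩
  have hqp := hpos p hp
  have normalized := sum_le_of_level_one (fun i => (q p)⁻¹ * p i)
    (fun i => mul_pos (inv_pos.2 hqp) (hp i))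
    (by rw [hhom _ (inv_pos.2 hqp) p hp, inv_mul_cancel₀ hqp.ne'])
  rwa [← Finset.mul_sum, inv_mul_le_iff₀ hqp, mul_comm, ← inv_mul_le_iff₀ hK] at normalized

lemma multiMellinConvergent_exp_neg (hq : IsCostFun n q) {z : Fin n → ℂ}
    (hz : ∀ i, 0 < (z i).re) : MultiMellinConvergent (fun p => (Real.exp (-q p) : ℂ)) z := by
  obtain ⟨k, hk, hkq⟩ := hq.exists_pos_mul_sum_le
  exact multiMellinConvergent_exp_neg_of_le hq.isPosHomogeneous.measurable hk hkq hz

end IsCostFun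

/-- Formula: for every `x ∈ ℝ^n_+` and `z` with `Re z = c`, writing `s = z₁ + ⋯ + zₙ`,
`Γ(s) ∫_{ℝ^n_+} p^{z-I} h(q(p₁x₁,…,pₙxₙ)) dp
  = x^{-z} (∫_{ℝ^n_+} p^{z-I} e^{-q(p)} dp) (∫_0^∞ t^{s-1} h(t) dt)`. -/
theorem gamma_mul_mellin_h_comp_q_eq
    (n : ℕ) (hn : 2 ≤ n) (q : (Fin n → ℝ) → ℝ) (hq : IsCostFun n q)
    (c : Fin n → ℝ) (hc : ∀ i, 0 < c i) (α : ℝ) (hα : α = ∑ i, c i)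
    (h : ℝ → ℝ) (hh : MemL1w1 α h) :
    ∀ x ∈ posOrth n, ∀ z : Fin n → ℂ, (∀ i, (z i).re = c i) →
      Complex.Gamma (∑ i, z i) *
          ∫ p in posOrth n,
            (∏ i, (p i : ℂ) ^ (z i - 1)) * (h (q (fun i => p i * x i)) : ℂ) =
        (∏ i, (x i : ℂ) ^ (-(z i))) *
          (∫ p in posOrth n, (∏ i, (p i : ℂ) ^ (z i - 1)) * (Real.exp (-(q p)) : ℂ)) *
          ∫ t in Ioi (0 : ℝ), (t : ℂ) ^ ((∑ i, z i) - 1) * (h t : ℂ) := by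
  intro x hx z hz
  have hz_pos : ∀ i, 0 < (z i).re := fun i => hz i ▸ hc i
  have hs : (∑ i, z i).re = α := by simp only [re_sum, hz, hα]
  have hα_pos : 0 < α := hα ▸ Finset.sum_pos (fun i _ => hc i) ⟨⟨0, by lia⟩, Finset.mem_univ _⟩
  exact (gamma_mul_mellin_h_comp_q_eq_general hq.isPosHomogeneous (hs ▸ hα_pos)
    (hq.multiMellinConvergent_exp_neg hz_pos) (hs ▸ hh).mellinConvergent hx).2
end
end
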